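/- arXiv:2510.17112 — 5 statements merged into one kernel-verified Lean document; each statement's English description precedes it below -/
import Mathlib

section
/- Let m, n be positive integers, let 0 ≤ k ≤ m, and let a ∈ S_{m−k} satisfy π(a) ≤ n^m. Then Y_{m,a} can be covered by at most (2m·log n + 8)^k · (n^m / π(a)) closed intervals of length n^{−2m}, where log denotes the natural logarithm. -/
open Set

/-- The value `g(a₁ ⋯ a_k) = 1/(a₁ + 1/(a₂ + ⋯ + 1/a_k))` of a finite continued fraction,
with `g(∅) = 0`. -/
noncomputable def cfVal : List ℕ → ℝ
  | [] => 0
  | a :: t => 1 / ((a : ℝ) + cfVal t)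

/-- A word of positive integers whose last letter (if any) is at least `2`
(so a member of `S_k` when it has length `k`). -/
def isCFWord (a : List ℕ) : Prop := (∀ x ∈ a, 1 ≤ x) ∧ ∀ ℓ ∈ a.getLast?, 2 ≤ ℓ

/-- `Y_{m,a} = {g(b) : b ∈ T_{m,a}}`, where `T_{m,a}` is the set of words `b ∈ S_m`
having `a` as a prefix. -/
def Yset (m : ℕ) (a : List ℕ) : Set ℝ :=
  {x : ℝ | ∃ b : List ℕ, b.length = m ∧ isCFWord b ∧ a <+: b ∧ x = cfVal b}

/-- `Ω` can be covered by at most `B` closed intervals of length `r`. -/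
def CoveredBy (Ω : Set ℝ) (r B : ℝ) : Prop :=
  ∃ t : Finset ℝ, (t.card : ℝ) ≤ B ∧ Ω ⊆ ⋃ c ∈ t, Set.Icc c (c + r)

/-!
Fix a threshold `N ≥ π(a)` (here `N = n ^ m`) and induct on the number `k` of letters still to be
chosen. If the next letter `x` satisfies `x ≤ N / π(a)`, then `π(ax) ≤ N` and the induction
hypothesis applies to `ax`; its counts, proportional to `N / (π(a) x)`, form a harmonic sum over
`x`, which produces the logarithm. If `x > N / π(a)`, then `g(x ⋯) ≤ π(a) / N`, and since
prefixing `a` contracts distances by a factor `π(a) ^ 2`, all values `g(ax ⋯)` lie within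
`1 / (N π(a))` of `g(a)`; the diameter of this ball is `2 N / π(a)` times `N⁻²`.
-/

theorem CoveredBy.mono {Ω Ω' : Set ℝ} {r B B' : ℝ} (h : CoveredBy Ω r B) (hΩ : Ω' ⊆ Ω)
    (hB : B ≤ B') : CoveredBy Ω' r B' :=
  let ⟨t, ht, hcover⟩ := h
  ⟨t, ht.trans hB, hΩ.trans hcover⟩

theorem CoveredBy.union {Ω₁ Ω₂ : Set ℝ} {r B₁ B₂ : ℝ} (h₁ : CoveredBy Ω₁ r B₁)
    (h₂ : CoveredBy Ω₂ r B₂) : CoveredBy (Ω₁ ∪ Ω₂) r (B₁ + B₂) := by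
  obtain ⟨t₁, ht₁, hcover₁⟩ := h₁
  obtain ⟨t₂, ht₂, hcover₂⟩ := h₂
  refine ⟨t₁ ∪ t₂, ?_, ?_⟩
  · calc ((t₁ ∪ t₂).card : ℝ) ≤ t₁.card + t₂.card := mod_cast Finset.card_union_le t₁ t₂
      _ ≤ B₁ + B₂ := add_le_add ht₁ ht₂
  · rw [Finset.set_biUnion_union]
    exact union_subset_union hcover₁ hcover₂

theorem CoveredBy.biUnion {ι : Type*} {s : Finset ι} {Ω : ι → Set ℝ} {r : ℝ} {B : ι → ℝ}
    (h : ∀ i ∈ s, CoveredBy (Ω i) r (B i)) :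
    CoveredBy (⋃ i ∈ s, Ω i) r (∑ i ∈ s, B i) := by
  classical
  induction s using Finset.induction_on with
  | empty => exact ⟨∅, by simp, by simp⟩
  | insert i s hi ih =>
    rw [Finset.set_biUnion_insert, Finset.sum_insert hi]
    exact (h i (Finset.mem_insert_self i s)).union
      (ih fun j hj => h j (Finset.mem_insert_of_mem hj))

theorem coveredBy_Icc {x y r : ℝ} (hxy : x ≤ y) (hr : 0 < r) :
    CoveredBy (Icc x y) r ((y - x) / r + 1) := by
  refine ⟨(Finset.range (⌊(y - x) / r⌋₊ + 1)).image fun i : ℕ => x + i * r, ?_, ?_⟩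
  · calc _ ≤ ((Finset.range (⌊(y - x) / r⌋₊ + 1)).card : ℝ) := mod_cast Finset.card_image_le
      _ = ⌊(y - x) / r⌋₊ + 1 := by simp
      _ ≤ (y - x) / r + 1 := by
        gcongr
        exact Nat.floor_le (div_nonneg (sub_nonneg.2 hxy) hr.le)
  · rintro z ⟨hxz, hzy⟩
    have hlower : ⌊(z - x) / r⌋₊ * r ≤ z - x :=
      (le_div_iff₀ hr).1 (Nat.floor_le (div_nonneg (sub_nonneg.2 hxz) hr.le))
    have hupper : z - x ≤ (⌊(z - x) / r⌋₊ + 1) * r :=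
      (div_le_iff₀ hr).1 (Nat.lt_floor_add_one _).le
    have hindex : ⌊(z - x) / r⌋₊ ≤ ⌊(y - x) / r⌋₊ := by gcongr
    simp only [mem_iUnion, Finset.mem_image, Finset.mem_range]
    exact ⟨_, ⟨_, Nat.lt_succ_of_le hindex, rfl⟩, by linarith, by linarith⟩

theorem coveredBy_singleton (x : ℝ) {r : ℝ} (hr : 0 < r) : CoveredBy {x} r 1 := by
  simpa using coveredBy_Icc (le_refl x) hr

theorem coveredBy_closedBall (x : ℝ) {ρ r : ℝ} (hρ : 0 ≤ ρ) (hr : 0 < r) :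
    CoveredBy (Metric.closedBall x ρ) r (2 * (ρ / r) + 1) := by
  rw [Real.closedBall_eq_Icc]
  exact (coveredBy_Icc (by linarith) hr).mono subset_rfl (le_of_eq (by ring))

theorem cfVal_nonneg (a : List ℕ) : 0 ≤ cfVal a := by
  induction a with
  | nil => exact le_rfl
  | cons x a ih =>
    rw [cfVal]
    positivity

theorem cfVal_cons_le {x : ℕ} (hx : 0 < x) (a : List ℕ) : cfVal (x :: a) ≤ 1 / x := by
  rw [cfVal]
  gcongr
  exact le_add_of_nonneg_right (cfVal_nonneg a)

theorem abs_one_div_add_sub_one_div_add_le {x u v : ℝ} (hx : 0 < x) (hu : 0 ≤ u) (hv : 0 ≤ v) :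
    |1 / (x + u) - 1 / (x + v)| ≤ |u - v| / x ^ 2 := by
  have hdiff : 1 / (x + u) - 1 / (x + v) = (v - u) / ((x + u) * (x + v)) := by
    field_simp
    ring
  rw [hdiff, abs_div, abs_of_pos (by positivity : 0 < (x + u) * (x + v)), abs_sub_comm v u]
  gcongr
  nlinarith

theorem abs_cfVal_append_sub_le {a : List ℕ} (ha : ∀ x ∈ a, 0 < x) (b : List ℕ) :
    |cfVal (a ++ b) - cfVal a| ≤ cfVal b / (a.prod : ℝ) ^ 2 := by
  induction a with
  | nil => simp [cfVal, abs_of_nonneg (cfVal_nonneg b)]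
  | cons x a ih =>
    obtain ⟨hx, ha⟩ := List.forall_mem_cons.1 ha
    calc |cfVal (x :: (a ++ b)) - cfVal (x :: a)|
        ≤ |cfVal (a ++ b) - cfVal a| / (x : ℝ) ^ 2 :=
          abs_one_div_add_sub_one_div_add_le (mod_cast hx) (cfVal_nonneg _) (cfVal_nonneg _)
      _ ≤ cfVal b / (a.prod : ℝ) ^ 2 / (x : ℝ) ^ 2 := by
          gcongr
          exact ih ha
      _ = cfVal b / ((x :: a).prod : ℝ) ^ 2 := by
          rw [List.prod_cons, Nat.cast_mul, mul_pow, div_div, mul_comm]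

theorem Yset_length_subset (a : List ℕ) : Yset a.length a ⊆ {cfVal a} := by
  rintro _ ⟨b, hlen, -, hab, rfl⟩
  rw [hab.eq_of_length hlen.symm, mem_singleton_iff]

theorem Yset_subset_biUnion_union_closedBall {m : ℕ} {a : List ℕ} (ha : ∀ x ∈ a, 0 < x)
    (hlen : a.length < m) {y : ℝ} (hy : 0 < y) :
    Yset m a ⊆ (⋃ x ∈ Finset.Icc 1 ⌊y⌋₊, Yset m (a ++ [x])) ∪
      Metric.closedBall (cfVal a) (1 / y / (a.prod : ℝ) ^ 2) := by
  rintro _ ⟨_, hblen, hb, ⟨s, rfl⟩, rfl⟩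
  cases s with
  | nil => exact absurd hblen (by simpa using hlen.ne)
  | cons x s =>
    have hx : 0 < x := hb.1 x (by simp)
    rcases le_or_gt x ⌊y⌋₊ with hxy | hxy
    · exact .inl <| mem_biUnion (Finset.mem_Icc.2 ⟨hx, hxy⟩)
        ⟨_, hblen, hb, ⟨s, by simp⟩, rfl⟩
    · right
      rw [Metric.mem_closedBall, Real.dist_eq]
      refine (abs_cfVal_append_sub_le ha (x :: s)).trans ?_
      gcongr
      calc cfVal (x :: s) ≤ 1 / x := cfVal_cons_le hx s
        _ ≤ 1 / y := by
          gcongr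
          exact (Nat.lt_of_floor_lt hxy).le

theorem sum_Icc_floor_div_le {y : ℝ} (hy : 1 ≤ y) :
    ∑ x ∈ Finset.Icc 1 ⌊y⌋₊, y / x ≤ (Real.log y + 1) * y := by
  have hharmonic := harmonic_floor_le_one_add_log y hy
  rw [harmonic_eq_sum_Icc] at hharmonic
  push_cast at hharmonic
  simp only [div_eq_mul_inv, ← Finset.mul_sum]
  nlinarith

theorem coveredBy_Yset_of_append {m : ℕ} {a : List ℕ} {N C : ℝ} (ha : ∀ x ∈ a, 0 < x)
    (hlen : a.length < m) (hN : a.prod ≤ N) (hC : 1 ≤ C)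
    (h : ∀ x, 0 < x → (a ++ [x]).prod ≤ N →
      CoveredBy (Yset m (a ++ [x])) (N ^ 2)⁻¹ (C * (N / (a ++ [x]).prod))) :
    CoveredBy (Yset m a) (N ^ 2)⁻¹ (C * (Real.log N + 4) * (N / a.prod)) := by
  have hP : (1 : ℝ) ≤ a.prod := mod_cast List.prod_pos ha
  have hN₀ : 0 < N := by linarith
  have hy : 1 ≤ N / a.prod := (one_le_div (by positivity)).2 hN
  have hsmall : ∀ x ∈ Finset.Icc 1 ⌊N / a.prod⌋₊,
      CoveredBy (Yset m (a ++ [x])) (N ^ 2)⁻¹ (C * (N / a.prod / x)) := fun x hx => by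
    obtain ⟨hx₁, hxy⟩ := Finset.mem_Icc.1 hx
    have hprod : ((a ++ [x]).prod : ℝ) = a.prod * x := by simp
    rw [div_div, ← hprod]
    refine h x hx₁ ?_
    rw [hprod, ← le_div_iff₀' (by positivity)]
    exact (Nat.le_floor_iff (by positivity)).1 hxy
  have hlarge := coveredBy_closedBall (cfVal a) (ρ := 1 / (N / a.prod) / (a.prod : ℝ) ^ 2)
    (r := (N ^ 2)⁻¹) (by positivity) (by positivity)
  have hradius : 1 / (N / a.prod) / (a.prod : ℝ) ^ 2 / (N ^ 2)⁻¹ = N / a.prod := by field_simp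
  refine ((CoveredBy.biUnion hsmall).union hlarge).mono
    (Yset_subset_biUnion_union_closedBall ha hlen (by positivity)) ?_
  calc _ = C * ∑ x ∈ Finset.Icc 1 ⌊N / a.prod⌋₊, N / a.prod / x + (2 * (N / a.prod) + 1) := by
        rw [hradius, Finset.mul_sum]
    _ ≤ C * ((Real.log (N / a.prod) + 1) * (N / a.prod)) + C * (3 * (N / a.prod)) := by
        gcongr
        · exact sum_Icc_floor_div_le hy
        · nlinarith
    _ = C * (Real.log (N / a.prod) + 4) * (N / a.prod) := by ring
    _ ≤ C * (Real.log N + 4) * (N / a.prod) := by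
        gcongr
        exact div_le_self hN₀.le hP

theorem cf_covering_count_general {m k : ℕ} {a : List ℕ} {N : ℝ} (hlen : a.length + k = m)
    (ha : ∀ x ∈ a, 0 < x) (hN : a.prod ≤ N) :
    CoveredBy (Yset m a) (N ^ 2)⁻¹ ((Real.log N + 4) ^ k * (N / a.prod)) := by
  have hP {b : List ℕ} (hb : ∀ x ∈ b, 0 < x) : (1 : ℝ) ≤ b.prod := mod_cast List.prod_pos hb
  have hN₁ : 1 ≤ N := (hP ha).trans hN
  have hL : 1 ≤ Real.log N + 4 := by linarith [Real.log_nonneg hN₁]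
  induction k generalizing a with
  | zero =>
    subst hlen
    refine (coveredBy_singleton (cfVal a) (by positivity)).mono (Yset_length_subset a) ?_
    simpa using (one_le_div (zero_lt_one.trans_le (hP ha))).2 hN
  | succ k ih =>
    rw [pow_succ]
    refine coveredBy_Yset_of_append ha (by omega) hN (one_le_pow₀ hL) fun x hx hxN => ?_
    exact ih (by simp only [List.length_append, List.length_singleton]; omega)
      (List.forall_mem_append.2 ⟨ha, List.forall_mem_singleton.2 hx⟩) hxN

/-- Let `m, n ≥ 1`, `0 ≤ k ≤ m`, and let `a ∈ S_{m-k}` satisfy `π(a) ≤ n^m`. Then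
`Y_{m,a}` can be covered by at most `(2m·log n + 8)^k · n^m/π(a)` closed intervals of
length `n^{-2m}`. -/
theorem cf_covering_count (m n : ℕ) (hm : 0 < m) (hn : 0 < n) (k : ℕ) (hk : k ≤ m)
    (a : List ℕ) (hlen : a.length = m - k) (haS : isCFWord a) (hπ : a.prod ≤ n ^ m) :
    CoveredBy (Yset m a) (((n : ℝ) ^ (2 * m))⁻¹)
      ((2 * (m : ℝ) * Real.log n + 8) ^ k * ((n : ℝ) ^ m / (a.prod : ℝ))) := by
  have hmlog : 0 ≤ m * Real.log n := by positivity
  have hL : m * Real.log n + 4 ≤ 2 * m * Real.log n + 8 := by linarith [hmlog]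
  rw [mul_comm 2 m, pow_mul]
  refine (cf_covering_count_general (k := k) (by omega) haS.1 (mod_cast hπ)).mono subset_rfl ?_
  rw [Real.log_pow]
  gcongr
end

section
/- Let m, n be positive integers. Then for every real number x ∈ (0, 1/n), there exists y ∈ E_m such that |x − y| ≤ n^{−2^m}. -/
open Set


/-- `E_m`: the set of rationals `x ∈ (0,1]` whose greedy Egyptian fraction expansion
has length `m`: there are integers `1 ≤ a 0 < a 1 < ⋯ < a (m-1)` with `x = Σ_{i<m} 1/a i`,
and for every `ℓ < m` one has `Σ_{i ≤ ℓ} 1/a i ≤ x` and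
`x - Σ_{i<ℓ} 1/a i < 1/(a ℓ - 1)` (the latter stated in the multiplied-out form
`(a ℓ - 1) * (x - Σ_{i<ℓ} 1/a i) < 1`, which is the correct reading also when `a ℓ = 1`,
where `1/(a ℓ - 1) = ∞`). -/
def Eset (m : ℕ) : Set ℝ :=
  {x : ℝ | x ∈ Set.Ioc (0 : ℝ) 1 ∧
    ∃ a : ℕ → ℕ,
      (∀ i, i < m → 1 ≤ a i) ∧
      (∀ i j, i < j → j < m → a i < a j) ∧
      x = ∑ i ∈ Finset.range m, (1 : ℝ) / (a i : ℝ) ∧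
      ∀ ℓ, ℓ < m →
        (∑ i ∈ Finset.range (ℓ + 1), (1 : ℝ) / (a i : ℝ)) ≤ x ∧
        ((a ℓ : ℝ) - 1) * (x - ∑ i ∈ Finset.range ℓ, (1 : ℝ) / (a i : ℝ)) < 1}

/-! Expand `x ∈ (0, 1]` by repeatedly subtracting the largest unit fraction `1 / d` that is
*strictly* smaller than what remains. No remainder vanishes, so the expansion can be stopped after
any number `m` of terms. Since `(d - 1) * r ≤ 1`, that is `d * r - 1 ≤ r`, a step turns the
remainder `r` into `r - 1 / d = (d * r - 1) / d ≤ r / d < r ^ 2`; hence `m` steps leave at most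
`x ^ 2 ^ m`. The sum of these `m` unit fractions is smaller than `x`, so the greedy inequalities
`(d - 1) * r ≤ 1`, weak for `x`, hold strictly for it. -/

section StrictGreedy

variable {K : Type*} [Field K] [LinearOrder K] [FloorSemiring K]

/-- The least natural number `d` with `1 / d < r`, for `r > 0`. The usual greedy choice
`⌈1 / r⌉` differs from it exactly when `1 / r` is an integer. -/
def strictGreedyDenom (r : K) : ℕ := ⌊1 / r⌋₊ + 1

/-- What is left of `x` after subtracting `i` unit fractions, each the largest one strictly below
the current remainder. -/
def strictGreedyRemainder (x : K) : ℕ → K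
  | 0 => x
  | i + 1 => strictGreedyRemainder x i - 1 / strictGreedyDenom (strictGreedyRemainder x i)

theorem sum_one_div_strictGreedyDenom (x : K) (l : ℕ) :
    ∑ i ∈ Finset.range l, (1 : K) / strictGreedyDenom (strictGreedyRemainder x i) =
      x - strictGreedyRemainder x l := by
  simpa only [strictGreedyRemainder, sub_sub_cancel] using
    Finset.sum_range_sub' (strictGreedyRemainder x) l

variable [IsStrictOrderedRing K] {r x : K}

theorem strictGreedyDenom_pos (r : K) : (0 : K) < strictGreedyDenom r :=
  Nat.cast_pos.mpr (Nat.succ_pos _)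

theorem one_div_strictGreedyDenom_lt (hr : 0 < r) : 1 / (strictGreedyDenom r : K) < r := by
  rw [one_div_lt (strictGreedyDenom_pos r) hr]
  simpa only [strictGreedyDenom, Nat.cast_add_one] using Nat.lt_floor_add_one (1 / r)

theorem strictGreedyDenom_sub_one_mul_le_one (hr : 0 < r) :
    ((strictGreedyDenom r : K) - 1) * r ≤ 1 := by
  rw [← le_div_iff₀ hr]
  simpa only [strictGreedyDenom, Nat.cast_add_one, add_sub_cancel_right] using
    Nat.floor_le (one_div_pos.mpr hr).le

theorem one_lt_strictGreedyDenom (hr : r ∈ Ioc 0 1) : 1 < strictGreedyDenom r :=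
  Nat.succ_lt_succ (Nat.floor_pos.mpr (one_le_one_div hr.1 hr.2))

theorem sub_one_div_mul_strictGreedyDenom_le (hr : 0 < r) :
    (r - 1 / strictGreedyDenom r) * strictGreedyDenom r ≤ r := by
  rw [sub_mul, one_div_mul_cancel (strictGreedyDenom_pos r).ne']
  linarith only [strictGreedyDenom_sub_one_mul_le_one hr]

theorem sub_one_div_strictGreedyDenom_lt_sq (hr : 0 < r) :
    r - 1 / strictGreedyDenom r < r ^ 2 :=
  calc r - 1 / strictGreedyDenom r
      ≤ r / strictGreedyDenom r :=
        (le_div_iff₀ (strictGreedyDenom_pos r)).mpr (sub_one_div_mul_strictGreedyDenom_le hr)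
    _ = r * (1 / strictGreedyDenom r) := div_eq_mul_one_div r _
    _ < r * r := mul_lt_mul_of_pos_left (one_div_strictGreedyDenom_lt hr) hr
    _ = r ^ 2 := (sq r).symm

theorem strictGreedyDenom_lt_strictGreedyDenom_sub (hr : r ∈ Ioc 0 1) :
    strictGreedyDenom r < strictGreedyDenom (r - 1 / strictGreedyDenom r) := by
  have remainder_pos : 0 < r - 1 / strictGreedyDenom r :=
    sub_pos.mpr (one_div_strictGreedyDenom_lt hr.1)
  refine Nat.lt_succ_of_le (Nat.le_floor ((le_div_iff₀' remainder_pos).mpr ?_))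
  exact (sub_one_div_mul_strictGreedyDenom_le hr.1).trans hr.2

theorem strictAnti_strictGreedyRemainder (x : K) : StrictAnti (strictGreedyRemainder x) :=
  strictAnti_nat_of_succ_lt fun _ ↦ sub_lt_self _ (one_div_pos.mpr (strictGreedyDenom_pos _))

theorem strictGreedyRemainder_pos (hx : 0 < x) : ∀ i, 0 < strictGreedyRemainder x i
  | 0 => hx
  | i + 1 => sub_pos.mpr (one_div_strictGreedyDenom_lt (strictGreedyRemainder_pos hx i))

theorem strictGreedyRemainder_mem_Ioc (hx : x ∈ Ioc 0 1) (i : ℕ) :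
    strictGreedyRemainder x i ∈ Ioc 0 1 :=
  ⟨strictGreedyRemainder_pos hx.1 i,
    ((strictAnti_strictGreedyRemainder x).antitone i.zero_le).trans hx.2⟩

theorem strictGreedyRemainder_le_pow (hx : 0 < x) (m : ℕ) :
    strictGreedyRemainder x m ≤ x ^ 2 ^ m := by
  induction m with
  | zero => simp only [strictGreedyRemainder, pow_zero, pow_one, le_refl]
  | succ m ih =>
    have remainder_pos := strictGreedyRemainder_pos hx m
    calc strictGreedyRemainder x (m + 1)
        ≤ strictGreedyRemainder x m ^ 2 := (sub_one_div_strictGreedyDenom_lt_sq remainder_pos).le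
      _ ≤ (x ^ 2 ^ m) ^ 2 := pow_le_pow_left₀ remainder_pos.le ih 2
      _ = x ^ 2 ^ (m + 1) := by rw [← pow_mul, ← pow_succ]

theorem strictMono_strictGreedyDenom (hx : x ∈ Ioc 0 1) :
    StrictMono fun i ↦ strictGreedyDenom (strictGreedyRemainder x i) :=
  strictMono_nat_of_lt_succ fun i ↦
    strictGreedyDenom_lt_strictGreedyDenom_sub (strictGreedyRemainder_mem_Ioc hx i)

end StrictGreedy

theorem sub_strictGreedyRemainder_mem_Eset {m : ℕ} (hm : 0 < m) {x : ℝ} (hx : x ∈ Ioc 0 1) :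
    x - strictGreedyRemainder x m ∈ Eset m := by
  have remainder_anti := strictAnti_strictGreedyRemainder x
  have remainder_mem := strictGreedyRemainder_mem_Ioc hx
  refine ⟨⟨sub_pos.mpr (remainder_anti hm), ?_⟩,
    fun i ↦ strictGreedyDenom (strictGreedyRemainder x i), fun i _ ↦ Nat.succ_pos _,
    fun i j hij _ ↦ strictMono_strictGreedyDenom hx hij,
    (sum_one_div_strictGreedyDenom x m).symm, fun l hl ↦ ?_⟩
  · exact (sub_le_self x (remainder_mem m).1.le).trans hx.2
  simp only [sum_one_div_strictGreedyDenom, sub_sub_sub_cancel_left]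
  refine ⟨sub_le_sub_left (remainder_anti.antitone hl) x, ?_⟩
  have denom_sub_one_pos : 0 < (strictGreedyDenom (strictGreedyRemainder x l) : ℝ) - 1 :=
    sub_pos.mpr (Nat.one_lt_cast.mpr (one_lt_strictGreedyDenom (remainder_mem l)))
  calc ((strictGreedyDenom (strictGreedyRemainder x l) : ℝ) - 1) *
        (strictGreedyRemainder x l - strictGreedyRemainder x m)
      < (strictGreedyDenom (strictGreedyRemainder x l) - 1) * strictGreedyRemainder x l :=
        mul_lt_mul_of_pos_left (sub_lt_self _ (remainder_mem m).1) denom_sub_one_pos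
    _ ≤ 1 := strictGreedyDenom_sub_one_mul_le_one (remainder_mem l).1

theorem egyptian_density_general {m : ℕ} (hm : 0 < m) {x : ℝ} (hx : x ∈ Ioc 0 1) :
    ∃ y ∈ Eset m, |x - y| ≤ x ^ 2 ^ m := by
  refine ⟨_, sub_strictGreedyRemainder_mem_Eset hm hx, ?_⟩
  rw [sub_sub_cancel, abs_of_pos (strictGreedyRemainder_pos hx.1 m)]
  exact strictGreedyRemainder_le_pow hx.1 m

/-- For `m, n ≥ 1` and every `x ∈ (0, 1/n)`, there exists `y ∈ E_m` with
`|x - y| ≤ n^{-2^m}`. -/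
theorem egyptian_density (m n : ℕ) (hm : 0 < m) (hn : 0 < n)
    (x : ℝ) (hx : x ∈ Set.Ioo (0 : ℝ) (1 / (n : ℝ))) :
    ∃ y ∈ Eset m, |x - y| ≤ ((n : ℝ) ^ (2 ^ m))⁻¹ := by
  obtain ⟨y, hy, hxy⟩ := egyptian_density_general hm
    ⟨hx.1, hx.2.le.trans (one_div (n : ℝ) ▸ Nat.cast_inv_le_one n)⟩
  exact ⟨y, hy, hxy.trans (by simpa using pow_le_pow_left₀ hx.1.le hx.2.le (2 ^ m))⟩
end

section
/- For all positive integers n and m, F_m ⊆ ⋃_{k=0}^m ⋃_{a ∈ G_{k,n}} [ξ(a), ξ(a) + m·n^{−2^k}]. -/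
open Set

/-- `F = {1/n : n ∈ ℕ, n ≥ 1} ∪ {0}`. -/
def Fset : Set ℝ := {0} ∪ {x : ℝ | ∃ n : ℕ, 0 < n ∧ x = 1 / (n : ℝ)}

/-- `F_m = F + ⋯ + F` (`m`-fold arithmetic sumset). -/
def FsumSet (m : ℕ) : Set ℝ :=
  {x : ℝ | ∃ a : Fin m → ℝ, (∀ i, a i ∈ Fset) ∧ x = ∑ i, a i}

/-- `G_{k,n}`: the set of nondecreasing `k`-tuples of positive integers with
`a i ≤ n^(2^i)` for every `i` (0-indexed); `G_{0,n}` contains only the empty word. -/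
def Gset (k n : ℕ) : Set (Fin k → ℕ) :=
  {a | (∀ i, 1 ≤ a i) ∧ Monotone a ∧ ∀ i : Fin k, a i ≤ n ^ 2 ^ (i : ℕ)}

/-- `ξ(a) = Σᵢ 1/aᵢ`. -/
noncomputable def xiVal {k : ℕ} (a : Fin k → ℕ) : ℝ := ∑ i, (1 : ℝ) / (a i : ℝ)

/-!
Write a point of `F_m` as a sum of its summands in decreasing order `g 0 ≥ g 1 ≥ ⋯`, continued by
zeros, and cut at the first index `k` with `g k < (t k)⁻¹`. The summands `g i` before the cut are
reciprocals of positive integers at most `t i`, so they spell a word `a`; each of the remaining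
`m - k` summands lies in `[0, (t k)⁻¹]`. This works for any positive thresholds `t`, in particular
for `t i = n ^ 2 ^ i`.
-/

/-- The nondecreasing words of length `k` in the positive integers whose letter at (0-based)
position `i` is at most `t i`. This is `G_{k,n}` with arbitrary real thresholds `t i` in place of
`n ^ 2 ^ i`. -/
def boundedWords (t : ℕ → ℝ) (k : ℕ) : Set (Fin k → ℕ) :=
  {a | (∀ i, 1 ≤ a i) ∧ Monotone a ∧ ∀ i : Fin k, (a i : ℝ) ≤ t i}

theorem Gset_eq_boundedWords (k n : ℕ) : Gset k n = boundedWords (fun i => (n : ℝ) ^ 2 ^ i) k := by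
  simp only [Gset, boundedWords, ← Nat.cast_pow, Nat.cast_le]

theorem zero_mem_Fset : (0 : ℝ) ∈ Fset := Or.inl rfl

theorem nonneg_of_mem_Fset {y : ℝ} (hy : y ∈ Fset) : 0 ≤ y := by
  rcases hy with rfl | ⟨p, -, rfl⟩
  · exact le_rfl
  · positivity

theorem exists_eq_one_div_of_mem_Fset {y : ℝ} (hy : y ∈ Fset) (hpos : 0 < y) :
    ∃ p : ℕ, 0 < p ∧ y = 1 / (p : ℝ) :=
  hy.resolve_left hpos.ne'

theorem exists_perm_antitone_comp {α : Type*} [LinearOrder α] {m : ℕ} (a : Fin m → α) :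
    ∃ σ : Equiv.Perm (Fin m), Antitone (a ∘ σ) :=
  ⟨Tuple.sort (OrderDual.toDual ∘ a), Tuple.monotone_sort (OrderDual.toDual ∘ a)⟩

theorem exists_antitone_sum_range_eq {α : Type*} [AddCommMonoid α] [LinearOrder α] {m : ℕ}
    {a : Fin m → α} (ha : ∀ i, 0 ≤ a i) :
    ∃ g : ℕ → α, Antitone g ∧ (∀ i, g i ∈ insert 0 (range a)) ∧ (∀ i, m ≤ i → g i = 0) ∧
      ∑ i ∈ Finset.range m, g i = ∑ i, a i := by
  obtain ⟨σ, hσ⟩ := exists_perm_antitone_comp a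
  let g : ℕ → α := fun i => if h : i < m then a (σ ⟨i, h⟩) else 0
  have g_of_lt {i : ℕ} (h : i < m) : g i = a (σ ⟨i, h⟩) := dif_pos h
  have g_of_ge {i : ℕ} (h : m ≤ i) : g i = 0 := dif_neg h.not_gt
  refine ⟨g, fun i j hij => ?_, fun i => ?_, fun i => g_of_ge, ?_⟩
  · rcases lt_or_ge j m with hj | hj
    · rw [g_of_lt hj, g_of_lt (hij.trans_lt hj)]
      exact hσ (Fin.mk_le_mk.2 hij)
    · rw [g_of_ge hj]
      rcases lt_or_ge i m with hi | hi
      · exact (ha _).trans_eq (g_of_lt hi).symm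
      · exact (g_of_ge hi).ge
  · rcases lt_or_ge i m with hi | hi
    · exact Or.inr ⟨_, (g_of_lt hi).symm⟩
    · exact Or.inl (g_of_ge hi)
  · calc ∑ i ∈ Finset.range m, g i = ∑ i : Fin m, a (σ i) := by
          rw [Finset.sum_range]
          exact Finset.sum_congr rfl fun i _ => g_of_lt i.isLt
      _ = ∑ i, a i := Equiv.sum_comp σ a

theorem exists_antitone_of_mem_FsumSet {m : ℕ} {x : ℝ} (hx : x ∈ FsumSet m) :
    ∃ g : ℕ → ℝ, Antitone g ∧ (∀ i, g i ∈ Fset) ∧ g m = 0 ∧ x = ∑ i ∈ Finset.range m, g i := by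
  obtain ⟨a, haF, rfl⟩ := hx
  obtain ⟨g, hanti, hrange, hzero, hsum⟩ :=
    exists_antitone_sum_range_eq fun i => nonneg_of_mem_Fset (haF i)
  have hsub : insert 0 (range a) ⊆ Fset := insert_subset zero_mem_Fset (range_subset_iff.2 haF)
  exact ⟨g, hanti, fun i => hsub (hrange i), hzero m le_rfl, hsum.symm⟩

theorem sum_range_mem_Icc_of_antitone {M : Type*} [AddCommMonoid M] [PartialOrder M]
    [IsOrderedAddMonoid M] {g : ℕ → M} (hanti : Antitone g) (hnonneg : ∀ i, 0 ≤ g i) {k m : ℕ}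
    (hkm : k ≤ m) :
    ∑ i ∈ Finset.range m, g i ∈
      Icc (∑ i ∈ Finset.range k, g i) (∑ i ∈ Finset.range k, g i + (m - k) • g k) := by
  rw [← Finset.sum_range_add_sum_Ico g hkm]
  have htail : ∑ i ∈ Finset.Ico k m, g i ≤ (m - k) • g k := by
    rw [← Nat.card_Ico]
    exact Finset.sum_le_card_nsmul _ _ _ fun i hi => hanti (Finset.mem_Ico.1 hi).1
  exact ⟨le_add_of_nonneg_right (Finset.sum_nonneg fun i _ => hnonneg i), by gcongr⟩

theorem exists_mem_boundedWords_xiVal_eq {g t : ℕ → ℝ} {k : ℕ} (hanti : Antitone g)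
    (hgF : ∀ i, g i ∈ Fset) (ht : ∀ i < k, 0 < t i) (hle : ∀ i < k, (t i)⁻¹ ≤ g i) :
    ∃ a ∈ boundedWords t k, xiVal a = ∑ i ∈ Finset.range k, g i := by
  have hpos (i : Fin k) : 0 < g i := (inv_pos.2 (ht i i.isLt)).trans_le (hle i i.isLt)
  choose a ha hga using fun i : Fin k => exists_eq_one_div_of_mem_Fset (hgF i) (hpos i)
  have haR (i : Fin k) : (0 : ℝ) < a i := Nat.cast_pos.2 (ha i)
  have hmono : Monotone a := fun i j hij => by
    have hji : 1 / (a j : ℝ) ≤ 1 / a i := by simpa only [← hga] using hanti (Fin.val_le_of_le hij)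
    exact Nat.cast_le.1 ((one_div_le_one_div (haR j) (haR i)).1 hji)
  have hbound (i : Fin k) : (a i : ℝ) ≤ t i := by
    have hinv : (t i)⁻¹ ≤ (a i : ℝ)⁻¹ := by simpa only [hga, one_div] using hle i i.isLt
    exact (inv_le_inv₀ (ht i i.isLt) (haR i)).1 hinv
  refine ⟨a, ⟨ha, hmono, hbound⟩, ?_⟩
  simp only [xiVal, Finset.sum_range, hga]

theorem Fm_subset_union_intervals_general {t : ℕ → ℝ} (ht : ∀ i, 0 < t i) (m : ℕ) :
    FsumSet m ⊆
      ⋃ (k : ℕ) (_ : k ≤ m) (a : Fin k → ℕ) (_ : a ∈ boundedWords t k),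
        Icc (xiVal a) (xiVal a + (m - k : ℕ) * (t k)⁻¹) := by
  classical
  intro x hx
  obtain ⟨g, hanti, hgF, hgm, rfl⟩ := exists_antitone_of_mem_FsumSet hx
  have hm : g m < (t m)⁻¹ := hgm.trans_lt (inv_pos.2 (ht m))
  have hcut : ∃ k, g k < (t k)⁻¹ := ⟨m, hm⟩
  obtain ⟨k, hkm, hk, hbefore⟩ : ∃ k ≤ m, g k < (t k)⁻¹ ∧ ∀ i < k, (t i)⁻¹ ≤ g i :=
    ⟨Nat.find hcut, Nat.find_min' hcut hm, Nat.find_spec hcut,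
      fun i hi => not_lt.1 (Nat.find_min hcut hi)⟩
  obtain ⟨a, ha, hxi⟩ := exists_mem_boundedWords_xiVal_eq hanti hgF (fun i _ => ht i) hbefore
  have hmem := sum_range_mem_Icc_of_antitone hanti (fun i => nonneg_of_mem_Fset (hgF i)) hkm
  rw [← hxi, nsmul_eq_mul] at hmem
  have herror : xiVal a + (m - k : ℕ) * g k ≤ xiVal a + (m - k : ℕ) * (t k)⁻¹ := by gcongr
  exact mem_iUnion₂.2 ⟨k, hkm, mem_iUnion₂.2 ⟨a, ha, Icc_subset_Icc_right herror hmem⟩⟩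

/-- For all `n, m ≥ 1`,
`F_m ⊆ ⋃_{k=0}^m ⋃_{a ∈ G_{k,n}} [ξ(a), ξ(a) + m·n^{-2^k}]`. -/
theorem Fm_subset_union_intervals (n m : ℕ) (hn : 0 < n) (hm : 0 < m) :
    FsumSet m ⊆
      ⋃ (k : ℕ) (_ : k ≤ m) (a : Fin k → ℕ) (_ : a ∈ Gset k n),
        Set.Icc (xiVal a) (xiVal a + (m : ℝ) * ((n : ℝ) ^ 2 ^ k)⁻¹) := by
  simp only [Gset_eq_boundedWords]
  have ht (i : ℕ) : 0 < (n : ℝ) ^ 2 ^ i := by positivity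
  refine (Fm_subset_union_intervals_general ht m).trans ?_
  gcongr
  exact Nat.sub_le _ _
end

section
/- For every positive integer m and every integer n ≥ 2, the set F_m can be covered by at most m(m+1)·n^{2^m − 1} closed intervals of length n^{−2^m}. -/
open Set

/-!
Fix `n`. A sum of `m + 1` elements of `F` either has a summand `1 / k` with `k < n`, so that it lies
in one of fewer than `n` translates of `F_m`, or has all its summands at most `1 / n`, so that it
lies in `[0, (m + 1) / n]`. The first kind is covered by induction with `n ^ 2` in place of `n`, as
`((n ^ 2) ^ 2 ^ m)⁻¹ = (n ^ 2 ^ (m + 1))⁻¹`; the second needs `(m + 1) * n ^ (2 ^ (m + 1) - 1)`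
intervals of that length. So `c_m * n ^ (2 ^ m - 1)` intervals suffice for `F_m`, where `c_0 = 1`
and `c_{m + 1} = c_m + m + 1`, that is, `c_m = 1 + m * (m + 1) / 2`.
-/

-- Caution: for `m : ℕ`, `m • S` is the `m`-fold sumset of `S`, not its dilate by `m`.
open scoped Pointwise

section Sumset

variable {M : Type*}

lemma succ_nsmul_subset_diff_add_union [AddCommMonoid M] (S H : Set M) (m : ℕ) :
    (m + 1) • S ⊆ (S \ H + m • S) ∪ (m + 1) • H := by
  induction m with
  | zero => simp
  | succ m ih =>
    rw [succ_nsmul' S, succ_nsmul' H]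
    rintro _ ⟨x, hx, y, hy, rfl⟩
    by_cases hxH : x ∈ H
    · obtain ⟨g, hg, z, hz, rfl⟩ | hyH := ih hy
      · have hxz : x + z ∈ (m + 1) • S := succ_nsmul' S m ▸ add_mem_add hx hz
        exact .inl ⟨g, hg, x + z, hxz, add_left_comm g x z⟩
      · exact .inr (add_mem_add hxH hyH)
    · exact .inl (add_mem_add ⟨hx, hxH⟩ hy)

lemma nsmul_Icc_subset [AddMonoid M] [Preorder M] [AddLeftMono M] [AddRightMono M]
    (a b : M) (m : ℕ) : m • Icc a b ⊆ Icc (m • a) (m • b) := by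
  induction m with
  | zero => simp
  | succ m ih =>
    simp only [succ_nsmul]
    exact (add_subset_add_right ih).trans (Icc_add_Icc_subset _ _ _ _)

end Sumset

namespace CoveredBy

variable {Ω Ω' : Set ℝ} {r B B' : ℝ}

lemma mono_s17 (h : CoveredBy Ω r B) (hΩ : Ω' ⊆ Ω) (hB : B ≤ B') : CoveredBy Ω' r B' :=
  let ⟨t, ht, hcov⟩ := h
  ⟨t, ht.trans hB, hΩ.trans hcov⟩

lemma union_s17 (h : CoveredBy Ω r B) (h' : CoveredBy Ω' r B') : CoveredBy (Ω ∪ Ω') r (B + B') := by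
  obtain ⟨t, ht, hcov⟩ := h
  obtain ⟨t', ht', hcov'⟩ := h'
  refine ⟨t ∪ t', ?_, ?_⟩
  · calc ((t ∪ t').card : ℝ) ≤ t.card + t'.card := mod_cast Finset.card_union_le t t'
      _ ≤ B + B' := add_le_add ht ht'
  · rw [Finset.set_biUnion_union]
    exact union_subset_union hcov hcov'

lemma add_of_encard_le (h : CoveredBy Ω r B) {G : Set ℝ} {k : ℕ} (hG : G.encard ≤ k) :
    CoveredBy (G + Ω) r (k * B) := by
  obtain ⟨t, ht, hcov⟩ := h
  lift G to Finset ℝ using finite_of_encard_le_coe hG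
  rw [encard_coe_eq_coe_finsetCard, Nat.cast_le] at hG
  refine ⟨G + t, ?_, ?_⟩
  · calc ((G + t).card : ℝ) ≤ G.card * t.card := mod_cast Finset.card_add_le
      _ ≤ k * B := by gcongr
  · rintro _ ⟨g, hg, x, hx, rfl⟩
    obtain ⟨c, hc, hcx, hxc⟩ := mem_iUnion₂.1 (hcov hx)
    exact mem_iUnion₂.2 ⟨g + c, Finset.add_mem_add hg hc, by linarith, by linarith⟩

end CoveredBy

lemma coveredBy_Icc_s17 (a r : ℝ) : CoveredBy (Icc a (a + r)) r 1 :=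
  ⟨{a}, by simp, by simp⟩

lemma coveredBy_Icc_add_mul (a r : ℝ) {N : ℕ} (hN : N ≠ 0) :
    CoveredBy (Icc a (a + N * r)) r N := by
  induction N, Nat.one_le_iff_ne_zero.2 hN using Nat.le_induction with
  | base => simpa using coveredBy_Icc_s17 a r
  | succ N hN ih =>
    have hlast : CoveredBy (Icc (a + N * r) (a + (N + 1 : ℕ) * r)) r 1 := by
      convert coveredBy_Icc_s17 (a + N * r) r using 2
      push_cast
      ring
    exact ((ih (by omega)).union_s17 hlast).mono_s17 Icc_subset_Icc_union_Icc (by simp)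

lemma coveredBy_Icc_zero_natCast_div {m n k : ℕ} (hm : m ≠ 0) (hn : n ≠ 0) (hk : k ≠ 0) :
    CoveredBy (Icc 0 (m / n)) ((n : ℝ) ^ k)⁻¹ (m * (n : ℝ) ^ (k - 1)) := by
  have hlength : (m / n : ℝ) = 0 + (m * n ^ (k - 1) : ℕ) * ((n : ℝ) ^ k)⁻¹ := by
    rw [← pow_sub_one_mul hk (n : ℝ)]
    push_cast
    field_simp
    simp
  rw [hlength]
  exact mod_cast coveredBy_Icc_add_mul 0 ((n : ℝ) ^ k)⁻¹ (by positivity)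

lemma mul_sq_pow_pred {M : Type*} [Monoid M] (x : M) {k : ℕ} (hk : k ≠ 0) :
    x * (x ^ 2) ^ (k - 1) = x ^ (2 * k - 1) := by
  rw [← pow_mul, ← pow_succ']
  congr 1
  omega

theorem Fm_covering_general {S : Set ℝ}
    (hS : ∀ n : ℕ, n ≠ 0 → (S \ Icc 0 (1 / n : ℝ)).encard ≤ n) (m : ℕ) {n : ℕ} (hn : n ≠ 0) :
    CoveredBy (m • S) ((n : ℝ) ^ 2 ^ m)⁻¹
      ((1 + (m : ℝ) * (m + 1) / 2) * (n : ℝ) ^ (2 ^ m - 1)) := by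
  induction m generalizing n with
  | zero => exact (coveredBy_Icc_s17 0 _).mono_s17 (by simp) (by simp)
  | succ m ih =>
    have hlarge : CoveredBy (S \ Icc 0 (1 / n : ℝ) + m • S) ((n : ℝ) ^ 2 ^ (m + 1))⁻¹
        (n * ((1 + (m : ℝ) * (m + 1) / 2) * ((n : ℝ) ^ 2) ^ (2 ^ m - 1))) := by
      have hscale := ih (pow_ne_zero 2 hn)
      rw [Nat.cast_pow, ← pow_mul, ← pow_succ'] at hscale
      exact hscale.add_of_encard_le (hS n hn)
    have hsmall : CoveredBy ((m + 1) • Icc 0 (1 / n : ℝ)) ((n : ℝ) ^ 2 ^ (m + 1))⁻¹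
        ((m + 1 : ℕ) * (n : ℝ) ^ (2 ^ (m + 1) - 1)) :=
      (coveredBy_Icc_zero_natCast_div m.succ_ne_zero hn (by positivity)).mono_s17
        ((nsmul_Icc_subset _ _ _).trans_eq (by simp [div_eq_mul_inv])) le_rfl
    refine (hlarge.union_s17 hsmall).mono_s17 (succ_nsmul_subset_diff_add_union S _ m) (le_of_eq ?_)
    rw [mul_left_comm, mul_sq_pow_pred _ (by positivity), ← pow_succ']
    push_cast
    ring

lemma FsumSet_eq_nsmul (m : ℕ) : FsumSet m = m • Fset := by
  have hsum : ∑ _i : Fin m, Fset = m • Fset := by simp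
  ext x
  rw [← hsum, mem_fintype_sum]
  simp only [FsumSet, mem_ofPred_eq, exists_prop, eq_comm]

lemma encard_Fset_diff_Icc_le {n : ℕ} (hn : n ≠ 0) : (Fset \ Icc 0 (1 / n : ℝ)).encard ≤ n := by
  have hsubset : Fset \ Icc 0 (1 / n : ℝ) ⊆ (fun k : ℕ ↦ 1 / (k : ℝ)) '' Iio n := by
    rintro _ ⟨rfl | ⟨k, hk, rfl⟩, hnot⟩
    · exact absurd ⟨le_rfl, by positivity⟩ hnot
    · have hkn : k < n := by
        by_contra! hnk
        exact hnot ⟨by positivity, by gcongr⟩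
      exact mem_image_of_mem _ hkn
  calc (Fset \ Icc 0 (1 / n : ℝ)).encard
    _ ≤ ((fun k : ℕ ↦ 1 / (k : ℝ)) '' Iio n).encard := encard_le_encard hsubset
    _ ≤ (Iio n).encard := encard_image_le _ _
    _ = n := by simp [← Finset.coe_Iio]

lemma one_add_half_mul_succ_le {m : ℕ} (hm : m ≠ 0) :
    1 + (m : ℝ) * (m + 1) / 2 ≤ m * (m + 1) := by
  have hm' : (1 : ℝ) ≤ m := mod_cast Nat.one_le_iff_ne_zero.2 hm
  nlinarith

/-- For `m ≥ 1` and `n ≥ 2`, the set `F_m` can be covered by at most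
`m(m+1)·n^{2^m - 1}` closed intervals of length `n^{-2^m}`. -/
theorem Fm_covering (m n : ℕ) (hm : 0 < m) (hn : 2 ≤ n) :
    CoveredBy (FsumSet m) (((n : ℝ) ^ 2 ^ m)⁻¹)
      ((m : ℝ) * ((m : ℝ) + 1) * (n : ℝ) ^ (2 ^ m - 1)) := by
  rw [FsumSet_eq_nsmul]
  exact (Fm_covering_general (fun _ ↦ encard_Fset_diff_Icc_le) m (by omega)).mono_s17 Subset.rfl
    (by gcongr; exact one_add_half_mul_succ_le hm.ne')
end

section
/- Let m, n be positive integers. Then for every real number x ∈ (0, 1/n), there exists y ∈ E_m^* such that |x − y| ≤ n^{−(m+1)}. -/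
open Set

/-- One step of the Engel expansion algorithm: `x ↦ ⌈1/x⌉ · x - 1`. -/
noncomputable def engelStep (x : ℝ) : ℝ := (⌈1 / x⌉ : ℝ) * x - 1

/-- The Engel algorithm iterates: `engelIter x i = x_{i+1}`, where `x₁ = x` and
`x_{i+1} = aᵢ xᵢ - 1` with `aᵢ = ⌈1/xᵢ⌉`. -/
noncomputable def engelIter (x : ℝ) (i : ℕ) : ℝ := engelStep^[i] x

/-- The Engel fraction of `x` has length `k`: the algorithm stays positive for the
first `k` steps and terminates with `x_{k+1} = 0`. -/
def engelLength (x : ℝ) (k : ℕ) : Prop :=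
  (∀ i, i < k → 0 < engelIter x i) ∧ engelIter x k = 0

/-- `E_m^*`: the set of rationals `x ∈ (0,1]` whose Engel fraction has length `m`. -/
def EstarSet (m : ℕ) : Set ℝ :=
  {x : ℝ | (∃ q : ℚ, (q : ℝ) = x) ∧ x ∈ Set.Ioc (0 : ℝ) 1 ∧ engelLength x m}

/-! Replacing `⌈1/x⌉` by `⌊1/x⌋ + 1` gives an expansion that never terminates: its remainders
`x = x₁ ≥ x₂ ≥ ⋯` stay positive. Its digits satisfy `aᵢ > 1/xᵢ ≥ 1/x`, so its `m`-th partial sum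
differs from `x` by `0 < x_{m+1} / (a₁ ⋯ a_m) ≤ x ^ (m + 1)`. The digits being nondecreasing, this
partial sum is itself given by an Engel fraction, of length `m`. -/

/-- The step of the Engel expansion with digit `⌊1/x⌋ + 1` instead of `⌈1/x⌉`. For `x > 0` the
digits differ only when `1/x` is an integer, where `engelStep` terminates and this step does not. -/
noncomputable def nonterminatingEngelStep (x : ℝ) : ℝ := (⌊1 / x⌋₊ + 1) * x - 1

/-- The `m`-th partial sum `∑ i ∈ {1, …, m}, 1 / (a₁ ⋯ aᵢ)` of the nonterminating Engel expansion
of `x`, in nested form; it takes values in `ℚ` because membership in `EstarSet` asks for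
rationality. -/
noncomputable def engelConvergent : ℕ → ℝ → ℚ
  | 0, _ => 0
  | m + 1, x => (1 + engelConvergent m (nonterminatingEngelStep x)) / (⌊1 / x⌋₊ + 1)

lemma engelLength_zero_iff {x : ℝ} : engelLength x 0 ↔ x = 0 := by
  simp [engelLength, engelIter]

lemma engelLength_succ_iff {x : ℝ} {m : ℕ} :
    engelLength x (m + 1) ↔ 0 < x ∧ engelLength (engelStep x) m := by
  simp only [engelLength, engelIter, Nat.forall_lt_succ_left, Function.iterate_zero_apply,
    Function.iterate_succ_apply, and_assoc]

lemma engelStep_one_add_div_add_one {k : ℕ} {z : ℝ} (hz : 0 ≤ z) (hkz : k * z < 1) :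
    engelStep ((1 + z) / (k + 1)) = z := by
  have hceil : ⌈1 / ((1 + z) / ((k : ℝ) + 1))⌉ = (k : ℤ) + 1 := by
    rw [Int.ceil_eq_iff, one_div_div, lt_div_iff₀ (by positivity), div_le_iff₀ (by positivity)]
    push_cast
    constructor
    · linarith
    · exact le_mul_of_one_le_right (by positivity) (by linarith)
  rw [engelStep, hceil]
  push_cast
  field_simp
  ring

section Convergents

variable {x : ℝ}

lemma floor_one_div_mul_le_one (hx : 0 < x) : ⌊1 / x⌋₊ * x ≤ 1 :=
  (le_div_iff₀ hx).1 (Nat.floor_le (by positivity))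

lemma one_lt_floor_one_div_add_one_mul (hx : 0 < x) : 1 < (⌊1 / x⌋₊ + 1) * x :=
  (div_lt_iff₀ hx).1 (Nat.lt_floor_add_one _)

lemma nonterminatingEngelStep_pos (hx : 0 < x) : 0 < nonterminatingEngelStep x :=
  sub_pos.2 (one_lt_floor_one_div_add_one_mul hx)

lemma nonterminatingEngelStep_le_self (hx : 0 < x) : nonterminatingEngelStep x ≤ x := by
  rw [nonterminatingEngelStep]
  linarith [floor_one_div_mul_le_one hx]

lemma cast_engelConvergent_succ (m : ℕ) (x : ℝ) :
    (engelConvergent (m + 1) x : ℝ) =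
      (1 + engelConvergent m (nonterminatingEngelStep x)) / (⌊1 / x⌋₊ + 1) := by
  simp only [engelConvergent]
  push_cast
  rfl

lemma engelConvergent_nonneg (m : ℕ) (x : ℝ) : 0 ≤ engelConvergent m x := by
  induction m generalizing x with
  | zero => rfl
  | succ m ih =>
    have := ih (nonterminatingEngelStep x)
    rw [engelConvergent]
    positivity

lemma sub_engelConvergent_succ (m : ℕ) (x : ℝ) :
    x - engelConvergent (m + 1) x =
      (nonterminatingEngelStep x - engelConvergent m (nonterminatingEngelStep x)) /
        (⌊1 / x⌋₊ + 1) := by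
  rw [cast_engelConvergent_succ]
  generalize (engelConvergent m (nonterminatingEngelStep x) : ℝ) = z
  rw [nonterminatingEngelStep]
  field_simp
  ring

lemma engelConvergent_lt_self (m : ℕ) (hx : 0 < x) : engelConvergent m x < x := by
  induction m generalizing x with
  | zero => simpa [engelConvergent] using hx
  | succ m ih =>
    rw [← sub_pos, sub_engelConvergent_succ]
    exact div_pos (sub_pos.2 (ih (nonterminatingEngelStep_pos hx))) (by positivity)

lemma sub_engelConvergent_le_pow (m : ℕ) (hx : 0 < x) :
    x - engelConvergent m x ≤ x ^ (m + 1) := by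
  induction m generalizing x with
  | zero => simp [engelConvergent]
  | succ m ih =>
    have hstep := nonterminatingEngelStep_pos hx
    rw [sub_engelConvergent_succ, div_le_iff₀ (by positivity)]
    calc nonterminatingEngelStep x - engelConvergent m (nonterminatingEngelStep x)
        ≤ nonterminatingEngelStep x ^ (m + 1) := ih hstep
      _ ≤ x ^ (m + 1) := by gcongr; exact nonterminatingEngelStep_le_self hx
      _ ≤ x ^ (m + 1) * ((⌊1 / x⌋₊ + 1) * x) :=
        le_mul_of_one_le_right (by positivity) (one_lt_floor_one_div_add_one_mul hx).le
      _ = x ^ (m + 1 + 1) * (⌊1 / x⌋₊ + 1) := by ring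

lemma floor_one_div_mul_engelConvergent_lt_one (m : ℕ) (hx : 0 < x) :
    ⌊1 / x⌋₊ * (engelConvergent m (nonterminatingEngelStep x) : ℝ) < 1 := by
  have hlt : engelConvergent m (nonterminatingEngelStep x) < x :=
    (engelConvergent_lt_self m (nonterminatingEngelStep_pos hx)).trans_le
      (nonterminatingEngelStep_le_self hx)
  rcases Nat.eq_zero_or_pos ⌊1 / x⌋₊ with hfloor | hfloor
  · simp only [hfloor, Nat.cast_zero, zero_mul, zero_lt_one]
  · calc ⌊1 / x⌋₊ * (engelConvergent m (nonterminatingEngelStep x) : ℝ)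
        < ⌊1 / x⌋₊ * x := by gcongr
      _ ≤ 1 := floor_one_div_mul_le_one hx

lemma engelLength_engelConvergent (m : ℕ) (hx : 0 < x) : engelLength (engelConvergent m x) m := by
  induction m generalizing x with
  | zero => simp [engelLength_zero_iff, engelConvergent]
  | succ m ih =>
    have hnonneg : (0 : ℝ) ≤ engelConvergent m (nonterminatingEngelStep x) :=
      mod_cast engelConvergent_nonneg m _
    rw [cast_engelConvergent_succ, engelLength_succ_iff,
      engelStep_one_add_div_add_one hnonneg (floor_one_div_mul_engelConvergent_lt_one m hx)]
    exact ⟨by positivity, ih (nonterminatingEngelStep_pos hx)⟩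

lemma engelConvergent_mem_EstarSet {m : ℕ} (hm : 0 < m) (hx : x ∈ Ioc 0 1) :
    (engelConvergent m x : ℝ) ∈ EstarSet m := by
  have hlength := engelLength_engelConvergent m hx.1
  have hpos : (0 : ℝ) < engelConvergent m x := hlength.1 0 hm
  exact ⟨⟨_, rfl⟩, ⟨hpos, (engelConvergent_lt_self m hx.1).le.trans hx.2⟩, hlength⟩

end Convergents

theorem engel_density_general {m : ℕ} (hm : 0 < m) {x : ℝ} (hx : x ∈ Ioc 0 1) :
    ∃ y ∈ EstarSet m, y < x ∧ x - y ≤ x ^ (m + 1) :=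
  ⟨engelConvergent m x, engelConvergent_mem_EstarSet hm hx, engelConvergent_lt_self m hx.1,
    sub_engelConvergent_le_pow m hx.1⟩

/-- For `m, n ≥ 1` and every `x ∈ (0, 1/n)`, there exists `y ∈ E_m^*` with
`|x - y| ≤ n^{-(m+1)}`. -/
theorem engel_density (m n : ℕ) (hm : 0 < m) (hn : 0 < n)
    (x : ℝ) (hx : x ∈ Set.Ioo (0 : ℝ) (1 / (n : ℝ))) :
    ∃ y ∈ EstarSet m, |x - y| ≤ ((n : ℝ) ^ (m + 1))⁻¹ := by
  have hx_le_one : x ≤ 1 := hx.2.le.trans (one_div (n : ℝ) ▸ Nat.cast_inv_le_one n)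
  obtain ⟨y, hy, hlt, hle⟩ := engel_density_general hm ⟨hx.1, hx_le_one⟩
  refine ⟨y, hy, ?_⟩
  calc |x - y| = x - y := abs_of_pos (sub_pos.2 hlt)
    _ ≤ x ^ (m + 1) := hle
    _ ≤ (1 / (n : ℝ)) ^ (m + 1) := pow_le_pow_left₀ hx.1.le hx.2.le _
    _ = ((n : ℝ) ^ (m + 1))⁻¹ := by rw [one_div, inv_pow]
end
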